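/- Let g, h, ξ > 0 and let (h_i)_{i≥1} be a sequence of real numbers. Let (w_i)_{i≥1} be a sequence of positive reals with w_1 ≤ g²/ξ, and suppose that for every i ≥ 1, w_{i+1} = g² v_i(2h_{i+1}), where v_i(ω) = (1/(2πw_i)) [ (1 + ((ω + 2h_i)/(2w_i))²)⁻¹ + (1 + ((ω − 2h_i)/(2w_i))²)⁻¹ ], and suppose the non-resonance condition min(|2h_{i+1} − 2h_i|, |2h_{i+1} + 2h_i|) ≥ h/2 holds for every i ≥ 1. Then for all i ≥ 1, w_i ≤ (g²/ξ) · (16g²/(πh²))^{i−1}. In particular, if 16g² < πh², the widths w_i decay exponentially in i. -/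

import Mathlib

open Real

/-- Off-resonance bound for a Lorentzian of halfwidth `2w`. -/
lemma lorentzian_tail_bound (h w x : ℝ) (hh : 0 < h) (hw : 0 < w) (hx : h / 2 ≤ |x|) :
    (1 + (x / (2 * w)) ^ 2)⁻¹ ≤ 16 * w ^ 2 / h ^ 2 := by
  have h1 : (h / 2) ^ 2 ≤ x ^ 2 := by
    rw [← sq_abs x]
    gcongr
  have h2 : h ^ 2 / (16 * w ^ 2) ≤ 1 + (x / (2 * w)) ^ 2 := by
    have e1 : h ^ 2 / (16 * w ^ 2) = (h / 2) ^ 2 / (4 * w ^ 2) := by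
      field_simp
      norm_num
    have e2 : (x / (2 * w)) ^ 2 = x ^ 2 / (4 * w ^ 2) := by
      rw [div_pow]
      ring
    rw [e1, e2]
    have : (h / 2) ^ 2 / (4 * w ^ 2) ≤ x ^ 2 / (4 * w ^ 2) := by gcongr
    linarith
  calc (1 + (x / (2 * w)) ^ 2)⁻¹ ≤ (h ^ 2 / (16 * w ^ 2))⁻¹ :=
        inv_anti₀ (by positivity) h2
    _ = 16 * w ^ 2 / h ^ 2 := inv_div _ _

/-- **Exponential decay of hybridization widths along a strongly disordered chain.**
Let `g, h, ξ > 0` and `(h_i)` a sequence of fields. Suppose `(w_i)` are positive with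
`w₁ ≤ g²/ξ` and `w_{i+1} = g² v_i(2 h_{i+1})`, where `v_i` is the two-Lorentzian structure
factor of halfwidth `2w_i` centered at `±2h_i`, and the non-resonance condition
`min(|2h_{i+1} − 2h_i|, |2h_{i+1} + 2h_i|) ≥ h/2` holds for all `i ≥ 1`. Then
`w_i ≤ (g²/ξ) (16g²/(πh²))^{i−1}` for all `i ≥ 1`. -/
theorem hybridization_width_exponential_decay
    (g h ξ : ℝ) (hg : 0 < g) (hh : 0 < h) (hξ : 0 < ξ)
    (hfield : ℕ → ℝ) (w : ℕ → ℝ) (hwpos : ∀ i, 1 ≤ i → 0 < w i)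
    (hw1 : w 1 ≤ g ^ 2 / ξ)
    (v : ℕ → ℝ → ℝ)
    (hv : ∀ i, v i = fun ω => (1 / (2 * π * w i)) *
      ((1 + ((ω + 2 * hfield i) / (2 * w i)) ^ 2)⁻¹
        + (1 + ((ω - 2 * hfield i) / (2 * w i)) ^ 2)⁻¹))
    (hrec : ∀ i, 1 ≤ i → w (i + 1) = g ^ 2 * v i (2 * hfield (i + 1)))
    (hres : ∀ i, 1 ≤ i →
      h / 2 ≤ min |2 * hfield (i + 1) - 2 * hfield i| |2 * hfield (i + 1) + 2 * hfield i|) :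
    ∀ i, 1 ≤ i → w i ≤ (g ^ 2 / ξ) * (16 * g ^ 2 / (π * h ^ 2)) ^ (i - 1) := by
  intro i hi
  induction i, hi using Nat.le_induction with
  | base => simpa using hw1
  | succ n hn ih =>
    have hw := hwpos n hn
    have hr := le_min_iff.mp (hres n hn)
    have b1 := lorentzian_tail_bound h (w n) _ hh hw hr.1
    have b2 := lorentzian_tail_bound h (w n) _ hh hw hr.2
    have hπ := Real.pi_pos
    have step : w (n + 1) ≤ w n * (16 * g ^ 2 / (π * h ^ 2)) := by
      rw [hrec n hn, hv n]
      calc _ ≤ g ^ 2 * ((1 / (2 * π * w n)) *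
            (16 * w n ^ 2 / h ^ 2 + 16 * w n ^ 2 / h ^ 2)) := by
            dsimp only
            gcongr
        _ = w n * (16 * g ^ 2 / (π * h ^ 2)) := by
            field_simp
            ring
    have e : n + 1 - 1 = (n - 1) + 1 := by omega
    rw [e, pow_succ (16 * g ^ 2 / (π * h ^ 2)), ← mul_assoc]
    exact step.trans (mul_le_mul_of_nonneg_right ih (by positivity))
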